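/- arXiv:math/9910188 — 8 statements merged into one kernel-verified Lean document; each statement's English description precedes it below -/
import Mathlib

section
/- Let G be a finite-dimensional Lie algebra over a field k and let O : G* → G be a skewsymmetric linear isomorphism. Define the skewsymmetric bilinear form ω on G by ω(x, y) = ⟨O⁻¹(x), y⟩. Then ω is a 2-cocycle on G (i.e., ω(x, [y, z]) + ω(y, [z, x]) + ω(z, [x, y]) = 0 for all x, y, z ∈ G) if and only if O satisfies O(O(u)·v − O(v)·u) = [O(u), O(v)] for all u, v ∈ G*. -/
/-- The coadjoint action of `X ∈ G` on `u ∈ G*`: `⟨X·u, Y⟩ = −⟨u, [X, Y]⟩`. -/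
noncomputable def coad {k : Type*} [Field k] {L : Type*} [LieRing L] [LieAlgebra k L]
    (X : L) (u : Module.Dual k L) : Module.Dual k L :=
  - (u ∘ₗ (LieAlgebra.ad k L X))

/-- **Drinfel'd.** For a skewsymmetric linear isomorphism `O : G* → G`,
the form `ω(x, y) = ⟨O⁻¹ x, y⟩` is a 2-cocycle on `G` iff
`O(O(u)·v − O(v)·u) = [O(u), O(v)]` for all `u, v ∈ G*`. -/
theorem nondegenerate_r_matrix_iff_two_cocycle (k : Type*) [Field k]
    (L : Type*) [LieRing L] [LieAlgebra k L] [FiniteDimensional k L]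
    (O : Module.Dual k L ≃ₗ[k] L)
    (hskew : ∀ u v : Module.Dual k L, u (O v) + v (O u) = 0) :
    (∀ x y z : L,
        O.symm x ⁅y, z⁆ + O.symm y ⁅z, x⁆ + O.symm z ⁅x, y⁆ = 0) ↔
      (∀ u v : Module.Dual k L,
        O (coad (O u) v - coad (O v) u) = ⁅O u, O v⁆) := by
  have key : ∀ x y z : L,
      O.symm x ⁅y, z⁆ + O.symm y ⁅z, x⁆ + O.symm z ⁅x, y⁆ =
        (coad x (O.symm y) - coad y (O.symm x)) z - O.symm ⁅x, y⁆ z := by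
    intro x y z
    have h := hskew (O.symm z) (O.symm ⁅x, y⁆)
    simp only [LinearEquiv.apply_symm_apply] at h
    have h2 : O.symm y ⁅z, x⁆ = - O.symm y ⁅x, z⁆ := by
      rw [← lie_skew z x, map_neg]
    simp only [coad, LinearMap.sub_apply, LinearMap.neg_apply, LinearMap.comp_apply,
      LieAlgebra.ad_apply]
    rw [h2]
    linear_combination h
  constructor
  · intro H u v
    rw [← LinearEquiv.eq_symm_apply]
    ext z
    have h := H (O u) (O v) z
    rw [key] at h
    simp only [LinearEquiv.symm_apply_apply] at h
    exact sub_eq_zero.mp h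
  · intro H x y z
    have h := H (O.symm x) (O.symm y)
    rw [← LinearEquiv.eq_symm_apply] at h
    simp only [LinearEquiv.apply_symm_apply] at h
    rw [key, h, sub_self]
end

section
/- Let G be a finite-dimensional Lie algebra over a field k and let O : G* → G be a skewsymmetric linear map. Then the trilinear identity ⟨u, [O(v), O(w)]⟩ + ⟨v, [O(w), O(u)]⟩ + ⟨w, [O(u), O(v)]⟩ = 0 holds for all u, v, w ∈ G* if and only if the bilinear identity O(O(u)·v − O(v)·u) = [O(u), O(v)] holds for all u, v ∈ G*. -/
/-- For a skewsymmetric linear map `O : G* → G`, the trilinear identity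
`⟨u, [O v, O w]⟩ + c.p. = 0` holds iff the bilinear identity
`O(O(u)·v − O(v)·u) = [O(u), O(v)]` holds. -/
theorem trilinear_iff_bilinear_O_equation (k : Type*) [Field k]
    (L : Type*) [LieRing L] [LieAlgebra k L] [FiniteDimensional k L]
    (O : Module.Dual k L →ₗ[k] L)
    (hskew : ∀ u v : Module.Dual k L, u (O v) + v (O u) = 0) :
    (∀ u v w : Module.Dual k L,
        u ⁅O v, O w⁆ + v ⁅O w, O u⁆ + w ⁅O u, O v⁆ = 0) ↔
      (∀ u v : Module.Dual k L,
        O (coad (O u) v - coad (O v) u) = ⁅O u, O v⁆) := by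
  have key : ∀ u v w : Module.Dual k L,
      w (O (coad (O u) v - coad (O v) u)) = - (u ⁅O v, O w⁆ + v ⁅O w, O u⁆) := by
    intro u v w
    have h := hskew w (coad (O u) v - coad (O v) u)
    have e : (coad (O u) v - coad (O v) u) (O w) = u ⁅O v, O w⁆ + v ⁅O w, O u⁆ := by
      rw [← lie_skew (O w) (O u)]
      simp only [coad, LinearMap.sub_apply, LinearMap.neg_apply, LinearMap.comp_apply,
        LieAlgebra.ad_apply, map_neg]
      ring
    rw [e] at h
    exact eq_neg_of_add_eq_zero_left h
  constructor
  · intro h u v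
    rw [← sub_eq_zero, ← Module.forall_dual_apply_eq_zero_iff k]
    intro w
    rw [map_sub, key]
    linear_combination - h u v w
  · intro h u v w
    have h1 := key u v w
    rw [h u v] at h1
    rw [h1]
    ring
end

section
/- Let G be a finite-dimensional Lie algebra over a field k and let O : G* → G be a skewsymmetric O-operator, where G* carries the coadjoint action. Equip G* with the Lie bracket [u, v] = O(u)·v − O(v)·u. Then the skewsymmetric bilinear form Ω on G* defined by Ω(u, v) = ⟨u, O(v)⟩ is a 2-cocycle on the Lie algebra G*; i.e., Ω([u, v], w) + Ω([v, w], u) + Ω([w, u], v) = 0 for all u, v, w ∈ G*. -/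
/-- **Proposition 2.19.** For a skewsymmetric `O`-operator `O : G* → G`, the
form `Ω(u, v) = ⟨u, O(v)⟩` is a 2-cocycle on `G*` equipped with the bracket
`[u, v] = O(u)·v − O(v)·u`. -/
theorem Omega_is_two_cocycle (k : Type*) [Field k]
    (L : Type*) [LieRing L] [LieAlgebra k L] [FiniteDimensional k L]
    (O : Module.Dual k L →ₗ[k] L)
    (hskew : ∀ u v : Module.Dual k L, u (O v) + v (O u) = 0)
    (hO : ∀ u v : Module.Dual k L,
      O (coad (O u) v - coad (O v) u) = ⁅O u, O v⁆) :
    ∀ u v w : Module.Dual k L,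
      (coad (O u) v - coad (O v) u) (O w)
        + (coad (O v) w - coad (O w) v) (O u)
        + (coad (O w) u - coad (O u) w) (O v) = 0 := by
  intro u v w
  have h := hskew w (coad (O u) v - coad (O v) u)
  rw [hO] at h
  have e1 : v ⁅O u, O w⁆ = - v ⁅O w, O u⁆ := by rw [← lie_skew, map_neg]
  have e2 : w ⁅O v, O u⁆ = - w ⁅O u, O v⁆ := by rw [← lie_skew, map_neg]
  have e3 : u ⁅O w, O v⁆ = - u ⁅O v, O w⁆ := by rw [← lie_skew, map_neg]
  simp only [coad, LinearMap.sub_apply, LinearMap.neg_apply, LinearMap.comp_apply,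
    LieAlgebra.ad_apply] at h ⊢
  rw [e1] at h
  rw [e1, e2, e3]
  linear_combination 2 * h
end

section
/- Let R be a commutative ring and ∂ : R → R a derivation. Define the bracket [X, Y] = X·∂(Y) − ∂(X)·Y on R and the bilinear form ω(X, Y) = ∂³(X)·Y. Then ω is a generalized 2-cocycle on the Lie algebra (R, [·,·]): for all X, Y, Z ∈ R, both ω(X, Y) + ω(Y, X) and ω(X, [Y, Z]) + ω(Y, [Z, X]) + ω(Z, [X, Y]) lie in the image of ∂ (as an additive map R → R). -/
/-- For a commutative ring `R` with a derivation `∂`, the form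
`ω(X, Y) = ∂³(X)·Y` is a generalized 2-cocycle on the Lie algebra of vector fields
`[X, Y] = X ∂Y − ∂X Y`: both `ω(X, Y) + ω(Y, X)` and
`ω(X, [Y, Z]) + ω(Y, [Z, X]) + ω(Z, [X, Y])` lie in the image of `∂`. -/
theorem partial_cubed_generalized_two_cocycle (R : Type*) [CommRing R]
    (d : R → R)
    (hadd : ∀ a b : R, d (a + b) = d a + d b)
    (hleib : ∀ a b : R, d (a * b) = a * d b + d a * b) :
    let br : R → R → R := fun X Y => X * d Y - d X * Y
    let ω : R → R → R := fun X Y => d (d (d X)) * Y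
    (∀ X Y : R, ω X Y + ω Y X ∈ Set.range d) ∧
      (∀ X Y Z : R, ω X (br Y Z) + ω Y (br Z X) + ω Z (br X Y) ∈ Set.range d) := by
  intro br ω
  have h0 : d 0 = 0 := by simpa using hadd 0 0
  have hneg : ∀ a : R, d (-a) = -d a := fun a => by
    have h := hadd a (-a)
    rw [add_neg_cancel, h0] at h
    linear_combination -h
  have hsub : ∀ a b : R, d (a - b) = d a - d b := fun a b => by
    rw [sub_eq_add_neg, hadd, hneg, sub_eq_add_neg]
  refine ⟨fun X Y => ⟨d (d X) * Y - d X * d Y + X * d (d Y), ?_⟩,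
    fun X Y Z => ⟨d (d X) * (Y * d Z - d Y * Z) + d (d Y) * (Z * d X - d Z * X)
      + d (d Z) * (X * d Y - d X * Y), ?_⟩⟩
  · simp only [hadd, hsub, hleib, ω]
    ring
  · simp only [hadd, hsub, hleib, ω, br]
    ring
end

section
/- Let R be a commutative ring, ∂ : R → R a derivation, and μ ∈ R a constant (∂(μ) = 0). Define a bracket on R × R by [(X, f), (Y, g)] = (X·∂Y − ∂X·Y, ∂(X·g − Y·f + μ·(∂X·∂²Y − ∂²X·∂Y))). Then this bracket is skewsymmetric and satisfies the Jacobi identity, so that R × R with this bracket is a Lie ring (the Lie algebra G(μ)). -/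
/-- For a commutative ring `R` with a derivation `∂` and a constant `μ`
(`∂μ = 0`), the bracket
`[(X, f), (Y, g)] = (X Y' − X' Y, (X g − Y f + μ (X' Y'' − X'' Y'))')`
on `R × R` is skewsymmetric and satisfies the Jacobi identity, i.e. `R × R` with this
bracket is a Lie ring (the Lie algebra `G(μ)`). -/
theorem G_mu_is_Lie_algebra (R : Type*) [CommRing R]
    (d : R → R)
    (hadd : ∀ a b : R, d (a + b) = d a + d b)
    (hleib : ∀ a b : R, d (a * b) = a * d b + d a * b)
    (μ : R) (hμ : d μ = 0) :
    let br : R × R → R × R → R × R := fun p q =>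
      (p.1 * d q.1 - d p.1 * q.1,
        d (p.1 * q.2 - q.1 * p.2 + μ * (d p.1 * d (d q.1) - d (d p.1) * d q.1)))
    (∀ a b : R × R, br a b = - br b a) ∧
      (∀ a b c : R × R, br (br a b) c + br (br b c) a + br (br c a) b = 0) := by
  have h0 : d 0 = 0 := by
    have := hadd 0 0
    simpa using this
  have hneg : ∀ a : R, d (-a) = - d a := by
    intro a
    have := hadd a (-a)
    rw [add_neg_cancel, h0] at this
    exact (neg_eq_of_add_eq_zero_right this.symm).symm
  have hsub : ∀ a b : R, d (a - b) = d a - d b := by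
    intro a b
    rw [sub_eq_add_neg, hadd, hneg, sub_eq_add_neg]
  intro br
  constructor
  · rintro ⟨X, f⟩ ⟨Y, g⟩
    ext
    · simp only [br, Prod.fst_neg]
      ring
    · simp only [br, Prod.snd_neg, hadd, hsub, hleib, hμ]
      ring
  · rintro ⟨X, f⟩ ⟨Y, g⟩ ⟨Z, h⟩
    ext
    · simp only [br, Prod.fst_add, Prod.fst_zero, hadd, hsub, hleib]
      ring
    · simp only [br, Prod.snd_add, Prod.snd_zero, hadd, hsub, hleib, hμ, h0]
      ring
end

section
/- Let G and H be finite-dimensional Lie algebras over a field k, let φ : G → H be a Lie algebra homomorphism with dual map φ* : H* → G*, and let O_G : G* → G be a skewsymmetric O-operator (with respect to the coadjoint action of G on G*). Then O_H := φ ∘ O_G ∘ φ* : H* → H is a skewsymmetric O-operator with respect to the coadjoint action of H on H*: it is skewsymmetric, and O_H(O_H(ū)·v̄ − O_H(v̄)·ū) = [O_H(ū), O_H(v̄)] for all ū, v̄ ∈ H*. -/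
/-- **Proposition 4.9.** If `φ : G → H` is a Lie algebra homomorphism and
`O_G : G* → G` a skewsymmetric `O`-operator, then `O_H = φ ∘ O_G ∘ φ* : H* → H` is a
skewsymmetric `O`-operator. -/
theorem O_operator_pushforward (k : Type*) [Field k]
    (G : Type*) [LieRing G] [LieAlgebra k G] [FiniteDimensional k G]
    (H : Type*) [LieRing H] [LieAlgebra k H] [FiniteDimensional k H]
    (φ : G →ₗ⁅k⁆ H)
    (OG : Module.Dual k G →ₗ[k] G)
    (hskew : ∀ u v : Module.Dual k G, u (OG v) + v (OG u) = 0)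
    (hO : ∀ u v : Module.Dual k G,
      OG (coad (OG u) v - coad (OG v) u) = ⁅OG u, OG v⁆) :
    let OH : Module.Dual k H →ₗ[k] H := φ.toLinearMap ∘ₗ OG ∘ₗ φ.toLinearMap.dualMap
    (∀ u v : Module.Dual k H, u (OH v) + v (OH u) = 0) ∧
      (∀ u v : Module.Dual k H,
        OH (coad (OH u) v - coad (OH v) u) = ⁅OH u, OH v⁆) := by
  intro OH
  have key : ∀ (x : G) (v : Module.Dual k H),
      φ.toLinearMap.dualMap (coad (φ x) v) = coad x (φ.toLinearMap.dualMap v) := by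
    intro x v
    ext y
    simp [coad]
  have hOH : ∀ u, OH u = φ (OG (φ.toLinearMap.dualMap u)) := fun u => rfl
  refine ⟨fun u v => ?_, fun u v => ?_⟩
  · exact hskew (φ.toLinearMap.dualMap u) (φ.toLinearMap.dualMap v)
  · rw [hOH (coad _ _ - _), map_sub, hOH u, hOH v, key, key, hO, LieHom.map_lie]
end

section
/- Let G and H be finite-dimensional Lie algebras over a field k, let φ : G → H be a Lie algebra homomorphism with dual map φ* : H* → G*, let O_G : G* → G be a skewsymmetric O-operator, and set O_H = φ ∘ O_G ∘ φ*. Equip G* with the bracket [u, v] = O_G(u)·v − O_G(v)·u and H* with the bracket [ū, v̄] = O_H(ū)·v̄ − O_H(v̄)·ū (coadjoint actions). Then φ* : H* → G* is a homomorphism of Lie algebras: φ*([ū, v̄]) = [φ*(ū), φ*(v̄)] for all ū, v̄ ∈ H*. -/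
/-- **Remark 4.17.** With `O_G : G* → G` a skewsymmetric `O`-operator and
`O_H = φ ∘ O_G ∘ φ*`, the dual map `φ* : H* → G*` is a homomorphism between the induced
Lie brackets `[u, v] = O(u)·v − O(v)·u` on `H*` and `G*`. -/
theorem dualMap_is_Lie_hom (k : Type*) [Field k]
    (G : Type*) [LieRing G] [LieAlgebra k G] [FiniteDimensional k G]
    (H : Type*) [LieRing H] [LieAlgebra k H] [FiniteDimensional k H]
    (φ : G →ₗ⁅k⁆ H)
    (OG : Module.Dual k G →ₗ[k] G)
    (hskew : ∀ u v : Module.Dual k G, u (OG v) + v (OG u) = 0)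
    (hO : ∀ u v : Module.Dual k G,
      OG (coad (OG u) v - coad (OG v) u) = ⁅OG u, OG v⁆) :
    let OH : Module.Dual k H →ₗ[k] H := φ.toLinearMap ∘ₗ OG ∘ₗ φ.toLinearMap.dualMap
    ∀ u v : Module.Dual k H,
      φ.toLinearMap.dualMap (coad (OH u) v - coad (OH v) u) =
        coad (OG (φ.toLinearMap.dualMap u)) (φ.toLinearMap.dualMap v) -
          coad (OG (φ.toLinearMap.dualMap v)) (φ.toLinearMap.dualMap u) := by
  intro OH u v
  ext x
  simp [OH, coad, LinearMap.dualMap_apply]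
end

section
/- Let G be a finite-dimensional Lie algebra over a field k with a skewsymmetric bilinear bracket [·,·]* on G*, let X·u denote the coadjoint action of G on G*, and let u·Y denote the action of G* on G defined by ⟨v, u·Y⟩ = −⟨[u, v]*, Y⟩. Define the bracket on G ⊕ G* by [(X, u), (Y, v)] = ([X, Y] + u·Y − v·X, [u, v]* + X·v − Y·u) and the symmetric pairing ((X, u), (Y, v)) = ⟨u, Y⟩ + ⟨v, X⟩. Then the pairing is ad-invariant: ([(X, u), (Y, v)], (Z, w)) = ((X, u), [(Y, v), (Z, w)]) for all X, Y, Z ∈ G and u, v, w ∈ G*. -/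
/-- **Remark A1.7.** For a skewsymmetric bilinear bracket `[·,·]*` on `G*`
with induced action `⟨v, u·Y⟩ = −⟨[u, v]*, Y⟩`, the crossed bracket
`[(X, u), (Y, v)] = ([X, Y] + u·Y − v·X, [u, v]* + X·v − Y·u)` on `G ⊕ G*` leaves the
natural symmetric pairing `((X, u), (Y, v)) = ⟨u, Y⟩ + ⟨v, X⟩` ad-invariant. -/
theorem crossed_bracket_ad_invariant_pairing (k : Type*) [Field k]
    (L : Type*) [LieRing L] [LieAlgebra k L] [FiniteDimensional k L]
    (brs : Module.Dual k L →ₗ[k] Module.Dual k L →ₗ[k] Module.Dual k L)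
    (hskew : ∀ u v : Module.Dual k L, brs u v = - brs v u) :
    let act : Module.Dual k L → L → L := fun u Y =>
      (Module.evalEquiv k L).symm (-((brs u).flip Y))
    let br : L × Module.Dual k L → L × Module.Dual k L → L × Module.Dual k L := fun p q =>
      (⁅p.1, q.1⁆ + act p.2 q.1 - act q.2 p.1,
        brs p.2 q.2 + coad p.1 q.2 - coad q.1 p.2)
    let pair : L × Module.Dual k L → L × Module.Dual k L → k := fun p q =>
      p.2 q.1 + q.2 p.1
    ∀ a b c : L × Module.Dual k L, pair (br a b) c = pair a (br b c) := by
  intro act br pair a b c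
  have hact : ∀ (u v : Module.Dual k L) (Y : L), v (act u Y) = - brs u v Y := by
    intro u v Y
    have h : Module.evalEquiv k L (act u Y) = -((brs u).flip Y) :=
      LinearEquiv.apply_symm_apply _ _
    exact LinearMap.congr_fun h v
  have hco : ∀ (X Y : L) (u : Module.Dual k L), coad X u Y = - u ⁅X, Y⁆ := fun _ _ _ => rfl
  obtain ⟨X, u⟩ := a
  obtain ⟨Y, v⟩ := b
  obtain ⟨Z, w⟩ := c
  simp only [pair, br, map_add, map_sub, LinearMap.add_apply, LinearMap.sub_apply, hact, hco]
  rw [hskew v u, hskew w u, ← lie_skew X Y, ← lie_skew X Z]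
  simp only [LinearMap.neg_apply, map_neg]
  ring
end
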